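/- arXiv:1404.6342 — 6 statements merged into one kernel-verified Lean document; each statement's English description precedes it below -/
import Mathlib

section
/- The modified energy G(t) := E(t) + bγF(t), with E(t) := ‖Bv(t)‖² + γ²‖v'(t)‖² and F(t) := γ⟨v(t), v'(t)⟩, is differentiable on [0,T] and satisfies the identity G'(t) = (−2 + bγ²)‖v'(t)‖² − b⟨v(t), v'(t) + B(Bv(t)) − f(t)⟩ + 2⟨f(t), v'(t)⟩ for all t ∈ [0,T]. -/
open Set RealInnerProductSpace

/-- The modified energy `G(t) := E(t) + bγF(t)`, with
`E(t) := ‖Bv(t)‖² + γ²‖v'(t)‖²` and `F(t) := γ⟨v(t), v'(t)⟩`, is differentiable on `[0,T]`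
and satisfies
`G'(t) = (−2 + bγ²)‖v'(t)‖² − b⟨v(t), v'(t) + B(Bv(t)) − f(t)⟩ + 2⟨f(t), v'(t)⟩`
for all `t ∈ [0,T]`. -/
theorem stmt4
    {H : Type*} [NormedAddCommGroup H] [InnerProductSpace ℝ H] [CompleteSpace H]
    (B : H →L[ℝ] H) (hBsym : ∀ x y : H, ⟪B x, y⟫ = ⟪x, B y⟫)
    (γ b T : ℝ) (hγ : 0 < γ) (hb : 0 < b) (hT : 0 < T)
    (f v v' v'' : ℝ → H)
    (hf : ContinuousOn f (Icc (0 : ℝ) T))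
    (hv : ∀ t ∈ Icc (0 : ℝ) T, HasDerivWithinAt v (v' t) (Icc (0 : ℝ) T) t)
    (hv' : ∀ t ∈ Icc (0 : ℝ) T, HasDerivWithinAt v' (v'' t) (Icc (0 : ℝ) T) t)
    (hv'' : ContinuousOn v'' (Icc (0 : ℝ) T))
    (heq : ∀ t ∈ Icc (0 : ℝ) T, γ ^ 2 • v'' t + v' t + B (B (v t)) = f t)
    (E F G : ℝ → ℝ)
    (hE : E = fun t => ‖B (v t)‖ ^ 2 + γ ^ 2 * ‖v' t‖ ^ 2)
    (hF : F = fun t => γ * ⟪v t, v' t⟫)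
    (hG : G = fun t => E t + b * γ * F t) :
    ∀ t ∈ Icc (0 : ℝ) T,
      HasDerivWithinAt G
        ((-2 + b * γ ^ 2) * ‖v' t‖ ^ 2 - b * ⟪v t, v' t + B (B (v t)) - f t⟫ +
          2 * ⟪f t, v' t⟫) (Icc (0 : ℝ) T) t := by
  intro t ht
  have h0 := hv t ht
  have h1 := hv' t ht
  have hB : HasDerivWithinAt (fun t => B (v t)) (B (v' t)) (Icc (0 : ℝ) T) t :=
    B.hasFDerivAt.comp_hasDerivWithinAt t h0
  have hD := ((hB.norm_sq).add ((h1.norm_sq).const_mul (γ ^ 2))).add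
    (((h0.inner ℝ h1).const_mul γ).const_mul (b * γ))
  subst hE hF hG
  refine HasDerivWithinAt.congr_deriv hD ?_
  have e := heq t ht
  have e1 : γ ^ 2 * ⟪v' t, v'' t⟫ + ⟪v' t, v' t⟫ + ⟪v' t, B (B (v t))⟫ = ⟪v' t, f t⟫ := by
    rw [← e, inner_add_right, inner_add_right, real_inner_smul_right]
  have e2 : γ ^ 2 * ⟪v t, v'' t⟫ + ⟪v t, v' t⟫ + ⟪v t, B (B (v t))⟫ = ⟪v t, f t⟫ := by
    rw [← e, inner_add_right, inner_add_right, real_inner_smul_right]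
  have e3 : ⟪B (v t), B (v' t)⟫ = ⟪v' t, B (B (v t))⟫ := by
    rw [real_inner_comm, hBsym]
  rw [inner_sub_right, inner_add_right, real_inner_comm (v' t) (f t), e3,
    ← real_inner_self_eq_norm_sq]
  linear_combination 2 * e1 + b * e2
end

section
/- The modified energy G(t) := E(t) + bγF(t), with E(t) := ‖Bv(t)‖² + γ²‖v'(t)‖², F(t) := γ⟨v(t), v'(t)⟩ and b := min{2/(2γ₁² + c₁ + 1), 1/(2c₁), 1/(γ₁c₁)}, satisfies the differential inequality G'(t) ≤ −(b/2)·E(t) + ((b+2)/(2b))·‖f(t)‖² for all t ∈ [0,T]. -/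
open Set RealInnerProductSpace

/-- The modified energy `G(t) := E(t) + bγF(t)`, with
`E(t) := ‖Bv(t)‖² + γ²‖v'(t)‖²`, `F(t) := γ⟨v(t), v'(t)⟩` and
`b := min{2/(2γ₁² + c₁ + 1), 1/(2c₁), 1/(γ₁c₁)}`, satisfies the differential inequality
`G'(t) ≤ −(b/2)·E(t) + ((b+2)/(2b))·‖f(t)‖²` for all `t ∈ [0,T]`. -/
theorem stmt5
    {H : Type*} [NormedAddCommGroup H] [InnerProductSpace ℝ H] [CompleteSpace H]
    (B : H →L[ℝ] H) (hBsym : ∀ x y : H, ⟪B x, y⟫ = ⟪x, B y⟫)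
    (c₁ : ℝ) (hc₁ : 1 ≤ c₁) (hB : ∀ z : H, ‖z‖ ^ 2 ≤ c₁ * ‖B z‖ ^ 2)
    (γ₁ γ T : ℝ) (hγ₁ : 0 < γ₁) (hγ : γ ∈ Ioc 0 γ₁) (hT : 0 < T)
    (f v v' v'' : ℝ → H)
    (hf : ContinuousOn f (Icc (0 : ℝ) T))
    (hv : ∀ t ∈ Icc (0 : ℝ) T, HasDerivWithinAt v (v' t) (Icc (0 : ℝ) T) t)
    (hv' : ∀ t ∈ Icc (0 : ℝ) T, HasDerivWithinAt v' (v'' t) (Icc (0 : ℝ) T) t)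
    (hv'' : ContinuousOn v'' (Icc (0 : ℝ) T))
    (heq : ∀ t ∈ Icc (0 : ℝ) T, γ ^ 2 • v'' t + v' t + B (B (v t)) = f t)
    (b : ℝ)
    (hb : b = min (2 / (2 * γ₁ ^ 2 + c₁ + 1)) (min (1 / (2 * c₁)) (1 / (γ₁ * c₁))))
    (E F G : ℝ → ℝ)
    (hE : E = fun t => ‖B (v t)‖ ^ 2 + γ ^ 2 * ‖v' t‖ ^ 2)
    (hF : F = fun t => γ * ⟪v t, v' t⟫)
    (hG : G = fun t => E t + b * γ * F t) :
    ∀ t ∈ Icc (0 : ℝ) T, ∃ G't : ℝ,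
      HasDerivWithinAt G G't (Icc (0 : ℝ) T) t ∧
      G't ≤ -(b / 2) * E t + ((b + 2) / (2 * b)) * ‖f t‖ ^ 2 := by
  intro t ht
  obtain ⟨hγ0, hγ1⟩ := hγ
  have hc0 : 0 < c₁ := by linarith
  have hb0 : 0 < b := by rw [hb]; positivity
  have hb1 : b * (2 * γ₁ ^ 2 + c₁ + 1) ≤ 2 := by
    rw [← le_div_iff₀ (by positivity), hb]; exact min_le_left _ _
  have hb2 : b * (2 * c₁) ≤ 1 := by
    rw [← le_div_iff₀ (by positivity), hb]
    exact (min_le_right _ _).trans (min_le_left _ _)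
  have hBv : HasDerivWithinAt (fun s => B (v s)) (B (v' t)) (Icc (0 : ℝ) T) t :=
    B.hasFDerivAt.comp_hasDerivWithinAt t (hv t ht)
  have h1 := hBv.norm_sq
  have h2 := (hv' t ht).norm_sq
  have h3 := (hv t ht).inner ℝ (hv' t ht)
  have hD := (h1.add (h2.const_mul (γ ^ 2))).add ((h3.const_mul γ).const_mul (b * γ))
  subst hG hE hF
  refine ⟨_, hD, ?_⟩
  have e1 : γ ^ 2 * ⟪v' t, v'' t⟫ + ‖v' t‖ ^ 2 + ⟪B (v t), B (v' t)⟫ = ⟪v' t, f t⟫ := by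
    rw [← heq t ht, inner_add_right, inner_add_right, inner_smul_right,
      real_inner_self_eq_norm_sq, ← hBsym (v' t), real_inner_comm (B (v t))]
  have e2 : γ ^ 2 * ⟪v t, v'' t⟫ + ⟪v t, v' t⟫ + ‖B (v t)‖ ^ 2 = ⟪v t, f t⟫ := by
    rw [← heq t ht, inner_add_right, inner_add_right, inner_smul_right,
      ← hBsym (v t), real_inner_self_eq_norm_sq]
  -- weighted Young inequality
  have young : ∀ (x y : H) (a : ℝ), 0 < a → 2 * ⟪x, y⟫ ≤ a * ‖x‖ ^ 2 + ‖y‖ ^ 2 / a := by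
    intro x y a ha
    have h := real_inner_le_norm x y
    have h' : 0 ≤ (a * ‖x‖ - ‖y‖) ^ 2 / a := by positivity
    have h'' : (a * ‖x‖ - ‖y‖) ^ 2 / a = a * ‖x‖ ^ 2 - 2 * (‖x‖ * ‖y‖) + ‖y‖ ^ 2 / a := by
      field_simp
      ring
    linarith
  have y1 := young (v' t) (f t) b hb0
  have y2 := young (v t) (f t) (1 / (2 * c₁)) (by positivity)
  have y3 := young (v t) (-v' t) (1 / (2 * c₁)) (by positivity)
  rw [inner_neg_right, norm_neg] at y3
  have hz : 1 / (2 * c₁) * ‖v t‖ ^ 2 ≤ ‖B (v t)‖ ^ 2 / 2 := by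
    rw [one_div_mul_eq_div, div_le_iff₀ (by positivity)]
    linarith [hB (v t)]
  have d1 : ∀ x : ℝ, x / (1 / (2 * c₁)) = 2 * c₁ * x := by intro x; field_simp
  rw [d1] at y2 y3
  have y2' := mul_le_mul_of_nonneg_left (y2.trans (add_le_add_left hz _)) hb0.le
  have y3' := mul_le_mul_of_nonneg_left (y3.trans (add_le_add_left hz _)) hb0.le
  have hfc := mul_le_mul_of_nonneg_right hb2 (sq_nonneg ‖f t‖)
  have hg : b * (2 * γ ^ 2 + c₁ + 1) ≤ 2 := by
    refine le_trans ?_ hb1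
    gcongr
  have hpc := mul_le_mul_of_nonneg_right hg (sq_nonneg ‖v' t‖)
  have hpos : 0 ≤ b * γ ^ 2 * ‖v' t‖ ^ 2 := by positivity
  have hs : (b + 2) / (2 * b) * ‖f t‖ ^ 2 = ‖f t‖ ^ 2 / 2 + ‖f t‖ ^ 2 / b := by
    field_simp
  have e2' : b * (γ ^ 2 * ⟪v t, v'' t⟫ + ⟪v t, v' t⟫ + ‖B (v t)‖ ^ 2) = b * ⟪v t, f t⟫ := by
    rw [e2]
  rw [hs, real_inner_self_eq_norm_sq]
  linarith
end

section
/- With b := min{2/(2γ₁² + c₁ + 1), 1/(2c₁), 1/(γ₁c₁)} and ω := b/(2 + c₁bγ₁), the modified energy G(t) := E(t) + bγF(t), where E(t) := ‖Bv(t)‖² + γ²‖v'(t)‖² and F(t) := γ⟨v(t), v'(t)⟩, satisfies G'(t) ≤ −ω·G(t) + ((b+2)/(2b))·‖f(t)‖² for all t ∈ [0,T]. -/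
open Set RealInnerProductSpace

theorem young_aux {H : Type*} [NormedAddCommGroup H] [InnerProductSpace ℝ H]
    (x y : H) (s : ℝ) (hs : 0 < s) : 2 * |⟪x, y⟫| ≤ s * ‖x‖ ^ 2 + ‖y‖ ^ 2 / s := by
  have h := abs_real_inner_le_norm x y
  have h2 : s * ‖x‖ ^ 2 + ‖y‖ ^ 2 / s - 2 * (‖x‖ * ‖y‖) = (s * ‖x‖ - ‖y‖) ^ 2 / s := by
    field_simp
    ring
  have h3 : 0 ≤ (s * ‖x‖ - ‖y‖) ^ 2 / s := by positivity
  linarith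

/-- With `b := min{2/(2γ₁² + c₁ + 1), 1/(2c₁), 1/(γ₁c₁)}` and
`ω := b/(2 + c₁bγ₁)`, the modified energy `G(t) := E(t) + bγF(t)`, where
`E(t) := ‖Bv(t)‖² + γ²‖v'(t)‖²` and `F(t) := γ⟨v(t), v'(t)⟩`, satisfies
`G'(t) ≤ −ω·G(t) + ((b+2)/(2b))·‖f(t)‖²` for all `t ∈ [0,T]`. -/
theorem stmt7
    {H : Type*} [NormedAddCommGroup H] [InnerProductSpace ℝ H] [CompleteSpace H]
    (B : H →L[ℝ] H) (hBsym : ∀ x y : H, ⟪B x, y⟫ = ⟪x, B y⟫)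
    (c₁ : ℝ) (hc₁ : 1 ≤ c₁) (hB : ∀ z : H, ‖z‖ ^ 2 ≤ c₁ * ‖B z‖ ^ 2)
    (γ₁ γ T : ℝ) (hγ₁ : 0 < γ₁) (hγ : γ ∈ Ioc 0 γ₁) (hT : 0 < T)
    (f v v' v'' : ℝ → H)
    (hf : ContinuousOn f (Icc (0 : ℝ) T))
    (hv : ∀ t ∈ Icc (0 : ℝ) T, HasDerivWithinAt v (v' t) (Icc (0 : ℝ) T) t)
    (hv' : ∀ t ∈ Icc (0 : ℝ) T, HasDerivWithinAt v' (v'' t) (Icc (0 : ℝ) T) t)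
    (hv'' : ContinuousOn v'' (Icc (0 : ℝ) T))
    (heq : ∀ t ∈ Icc (0 : ℝ) T, γ ^ 2 • v'' t + v' t + B (B (v t)) = f t)
    (b ω : ℝ)
    (hb : b = min (2 / (2 * γ₁ ^ 2 + c₁ + 1)) (min (1 / (2 * c₁)) (1 / (γ₁ * c₁))))
    (hω : ω = b / (2 + c₁ * b * γ₁))
    (E F G : ℝ → ℝ)
    (hE : E = fun t => ‖B (v t)‖ ^ 2 + γ ^ 2 * ‖v' t‖ ^ 2)
    (hF : F = fun t => γ * ⟪v t, v' t⟫)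
    (hG : G = fun t => E t + b * γ * F t) :
    ∀ t ∈ Icc (0 : ℝ) T, ∃ G't : ℝ,
      HasDerivWithinAt G G't (Icc (0 : ℝ) T) t ∧
      G't ≤ -ω * G t + ((b + 2) / (2 * b)) * ‖f t‖ ^ 2 := by
  intro t ht
  obtain ⟨hγ0, hγ1⟩ := hγ
  have hc0 : 0 < c₁ := by linarith
  have hb0 : 0 < b := by
    rw [hb]
    refine lt_min (by positivity) (lt_min (by positivity) (by positivity))
  have hb1 : b * (2 * γ₁ ^ 2 + c₁ + 1) ≤ 2 := by
    rw [← le_div_iff₀ (by positivity), hb]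
    exact min_le_left _ _
  have hb2 : b * (2 * c₁) ≤ 1 := by
    rw [← le_div_iff₀ (by positivity), hb]
    exact (min_le_right _ _).trans (min_le_left _ _)
  have hBv : HasDerivWithinAt (fun t => B (v t)) (B (v' t)) (Icc (0 : ℝ) T) t :=
    B.hasFDerivAt.comp_hasDerivWithinAt t (hv t ht)
  have hD := (hBv.norm_sq.add ((hv' t ht).norm_sq.const_mul (γ ^ 2))).add
    ((((hv t ht).inner ℝ (hv' t ht)).const_mul γ).const_mul (b * γ))
  subst hE hF hG
  refine ⟨_, hD, ?_⟩
  have e1 : ⟪v' t, f t⟫ = γ ^ 2 * ⟪v' t, v'' t⟫ + ‖v' t‖ ^ 2 + ⟪B (v t), B (v' t)⟫ := by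
    rw [← heq t ht, inner_add_right, inner_add_right, inner_smul_right,
      real_inner_self_eq_norm_sq, ← hBsym (v' t), real_inner_comm (B (v t))]
  have e2 : ⟪v t, f t⟫ = γ ^ 2 * ⟪v t, v'' t⟫ + ⟪v t, v' t⟫ + ‖B (v t)‖ ^ 2 := by
    rw [← heq t ht, inner_add_right, inner_add_right, inner_smul_right,
      ← hBsym (v t), real_inner_self_eq_norm_sq]
  have y1 := young_aux (v' t) (f t) b hb0
  have y2 := young_aux (v t) (f t) b hb0
  have y3 := young_aux (v t) (v' t) (1 / (2 * c₁)) (by positivity)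
  have y4 := young_aux (v t) (v' t) (1 / γ) (by positivity)
  have hr := hB (v t)
  have a1 := le_abs_self ⟪v' t, f t⟫
  have a2 := le_abs_self ⟪v t, f t⟫
  have a3 := neg_abs_le ⟪v t, v' t⟫
  have a4 := le_abs_self ⟪v t, v' t⟫
  simp only [real_inner_self_eq_norm_sq]
  have hp : 0 ≤ ‖B (v t)‖ ^ 2 := by positivity
  have hq : 0 ≤ ‖v' t‖ ^ 2 := by positivity
  have hr0 : 0 ≤ ‖v t‖ ^ 2 := by positivity
  generalize ‖B (v t)‖ ^ 2 = p at *
  generalize ‖v' t‖ ^ 2 = q at *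
  generalize ‖v t‖ ^ 2 = r at *
  generalize ‖f t‖ ^ 2 = φ at *
  generalize |⟪v t, v' t⟫| = m at *
  generalize |⟪v t, f t⟫| = m2 at *
  generalize |⟪v' t, f t⟫| = m1 at *
  generalize ⟪v t, v' t⟫ = x at *
  generalize ⟪v t, f t⟫ = x2 at *
  generalize ⟪v' t, f t⟫ = x1 at *
  generalize ⟪B (v t), B (v' t)⟫ = z at *
  generalize ⟪v' t, v'' t⟫ = w1 at *
  generalize ⟪v t, v'' t⟫ = w2 at *
  -- the bound on omega * G
  have k4 : 2 * (γ ^ 2 * x) ≤ γ₁ * (c₁ * p + c₁ * (γ ^ 2 * q)) := by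
    have h : γ ^ 2 * (2 * m) ≤ γ ^ 2 * (1 / γ * r + q / (1 / γ)) := by gcongr
    have h' : γ ^ 2 * (1 / γ * r + q / (1 / γ)) = γ * (r + γ ^ 2 * q) := by field_simp
    have h1 : γ ^ 2 * x ≤ γ ^ 2 * m := by gcongr
    have h2 : γ ^ 2 * q ≤ c₁ * (γ ^ 2 * q) := le_mul_of_one_le_left (by positivity) hc₁
    have h3 : γ * (r + γ ^ 2 * q) ≤ γ₁ * (c₁ * p + c₁ * (γ ^ 2 * q)) := by gcongr
    linarith
  have kG : ω * (p + γ ^ 2 * q + b * γ * (γ * x)) ≤ b / 2 * (p + γ ^ 2 * q) := by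
    have hK : 0 < 2 + c₁ * b * γ₁ := by positivity
    have : b / 2 * (p + γ ^ 2 * q)
        = ω * ((2 + c₁ * b * γ₁) / 2 * (p + γ ^ 2 * q)) := by
      rw [hω]; field_simp
    rw [this]
    have hω0 : 0 ≤ ω := by rw [hω]; positivity
    apply mul_le_mul_of_nonneg_left _ hω0
    have := mul_le_mul_of_nonneg_left k4 hb0.le
    linarith
  have k2 : b * (2 * x2) ≤ b * p / 2 + φ := by
    have h : b * (2 * x2) ≤ b * (b * r + φ / b) := by gcongr; linarith
    have h' : b * (b * r + φ / b) = b * b * r + φ := by field_simp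
    have h1 : b * b * r ≤ b * b * (c₁ * p) := by gcongr
    have h2 : b * p * (b * (2 * c₁)) ≤ b * p * 1 := by gcongr
    linarith
  have k3 : b * (-2 * x) ≤ b * p / 2 + 2 * (b * c₁ * q) := by
    have h : b * (-2 * x) ≤ b * (1 / (2 * c₁) * r + q / (1 / (2 * c₁))) := by
      gcongr; linarith
    have h1 : 1 / (2 * c₁) * r ≤ 1 / (2 * c₁) * (c₁ * p) := by gcongr
    have h1' : 1 / (2 * c₁) * (c₁ * p) = p / 2 := by field_simp
    have h2 : q / (1 / (2 * c₁)) = 2 * c₁ * q := by field_simp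
    have h3 : b * (1 / (2 * c₁) * r + q / (1 / (2 * c₁))) ≤ b * (p / 2 + 2 * c₁ * q) := by
      rw [h2, ← h1']; gcongr
    linarith
  have kq : q * (b * (2 * γ₁ ^ 2 + c₁ + 1)) ≤ q * 2 := by gcongr
  have kγ : b * q * γ ^ 2 ≤ b * q * γ₁ ^ 2 := by gcongr
  have kγ0 : 0 ≤ b * q * γ ^ 2 := by positivity
  have hφ : (b + 2) / (2 * b) * φ = φ / 2 + φ / b := by field_simp
  rw [hφ]
  have f1 : b * x2 = b * (γ ^ 2 * w2 + x + p) := by rw [e2]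
  linarith
end

section
/- With b := min{2/(2γ₁² + c₁ + 1), 1/(2c₁), 1/(γ₁c₁)} and ω := b/(2 + c₁bγ₁), the energy E(t) := ‖Bv(t)‖² + γ²‖v'(t)‖² satisfies, for all t ∈ [0,T], the decay estimate E(t) ≤ (b/ω)·e^{−ωt}·E(0) + ((b+2)/(bω))·(1 − e^{−ωt})·sup{‖f(s)‖² : s ∈ [0,t]}. The constants b and ω depend only on c₁ and γ₁ and not on γ ∈ (0,γ₁]. -/
open Set RealInnerProductSpace

theorem aux_quad (b c g x y z p i : ℝ) (hb : 0 < b) (hc : 1 ≤ c) (hi : i * b = 1)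
    (h1 : b * (2 * g ^ 2 + c + 1) ≤ 2) (h2 : b * c ≤ 1 / 2)
    (hx : 0 ≤ x) (hy : 0 ≤ y) (hz : 0 ≤ z) (hp : z ^ 2 ≤ c * p) :
    2 * (x * y) + b * (z * x) + b * (z * y) ≤
      (2 - 3 * b * g ^ 2 / 2) * y ^ 2 + b / 2 * p + (1 / 2 + i) * x ^ 2 := by
  have hz1 : z * (x + y) ≤ p / 2 + c * (x + y) ^ 2 / 2 := by
    have : c * (z * (x + y)) ≤ c * (p / 2 + c * (x + y) ^ 2 / 2) := by
      nlinarith [sq_nonneg (z - c * (x + y))]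
    exact le_of_mul_le_mul_left this (by linarith)
  have hz2 := mul_le_mul_of_nonneg_left hz1 hb.le
  obtain ⟨u, hu⟩ : ∃ u, u = b * c := ⟨_, rfl⟩
  have hu0 : b ≤ u := by rw [hu]; nlinarith
  have hu1 : u ≤ 1 / 2 := by rw [hu]; exact h2
  have hk : 1 / 2 + 3 * u / 4 + 3 * b / 4 ≤ 2 - 3 * b * g ^ 2 / 2 := by
    rw [hu]; nlinarith
  have hk' := mul_le_mul_of_nonneg_right hk (sq_nonneg y)
  have key : 2 * (x * y) + u / 2 * (x + y) ^ 2 ≤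
      (1 / 2 + 3 * u / 4 + 3 * b / 4) * y ^ 2 + (1 / 2 + i) * x ^ 2 := by
    have hi0 : 0 < i := by
      by_contra h
      nlinarith
    by_cases h : b ≤ 2 / 5
    · have hi2 : 5 / 2 ≤ i := by
        by_contra h'
        nlinarith
      have e1 := mul_nonneg (by linarith : 0 ≤ 1 + u / 2) (sq_nonneg (y - 2 * x))
      have e2 := mul_nonneg (by linarith : 0 ≤ i + 1 / 2 - u / 2 - 2 - u) (sq_nonneg x)
      have e3 := mul_nonneg hb.le (sq_nonneg y)
      nlinarith
    · have hi2 : 2 ≤ i := by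
        by_contra h'
        nlinarith
      have e1 := mul_nonneg (by linarith : 0 ≤ 2 + u) (sq_nonneg (2 * y - 3 * x))
      have e2 := mul_nonneg (by linarith : 0 ≤ i + 1 / 2 - u / 2 - 3 / 2 - 3 / 4 * u) (sq_nonneg x)
      have e3 := mul_nonneg (by linarith : 0 ≤ 1 / 2 + u / 4 + 3 * b / 4 - 2 / 3 - u / 3)
        (sq_nonneg y)
      nlinarith
  rw [hu] at key hk'
  nlinarith

/-- With `b := min{2/(2γ₁² + c₁ + 1), 1/(2c₁), 1/(γ₁c₁)}` and
`ω := b/(2 + c₁bγ₁)` (constants depending only on `c₁` and `γ₁`, not on `γ ∈ (0,γ₁]`),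
the energy `E(t) := ‖Bv(t)‖² + γ²‖v'(t)‖²` satisfies, for all `t ∈ [0,T]`,
`E(t) ≤ (b/ω)·e^{−ωt}·E(0) + ((b+2)/(bω))·(1 − e^{−ωt})·sup{‖f(s)‖² : s ∈ [0,t]}`. -/
theorem stmt9
    {H : Type*} [NormedAddCommGroup H] [InnerProductSpace ℝ H] [CompleteSpace H]
    (B : H →L[ℝ] H) (hBsym : ∀ x y : H, ⟪B x, y⟫ = ⟪x, B y⟫)
    (c₁ : ℝ) (hc₁ : 1 ≤ c₁) (hB : ∀ z : H, ‖z‖ ^ 2 ≤ c₁ * ‖B z‖ ^ 2)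
    (γ₁ γ T : ℝ) (hγ₁ : 0 < γ₁) (hγ : γ ∈ Ioc 0 γ₁) (hT : 0 < T)
    (f v v' v'' : ℝ → H)
    (hf : ContinuousOn f (Icc (0 : ℝ) T))
    (hv : ∀ t ∈ Icc (0 : ℝ) T, HasDerivWithinAt v (v' t) (Icc (0 : ℝ) T) t)
    (hv' : ∀ t ∈ Icc (0 : ℝ) T, HasDerivWithinAt v' (v'' t) (Icc (0 : ℝ) T) t)
    (hv'' : ContinuousOn v'' (Icc (0 : ℝ) T))
    (heq : ∀ t ∈ Icc (0 : ℝ) T, γ ^ 2 • v'' t + v' t + B (B (v t)) = f t)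
    (b ω : ℝ)
    (hb : b = min (2 / (2 * γ₁ ^ 2 + c₁ + 1)) (min (1 / (2 * c₁)) (1 / (γ₁ * c₁))))
    (hω : ω = b / (2 + c₁ * b * γ₁))
    (E : ℝ → ℝ)
    (hE : E = fun t => ‖B (v t)‖ ^ 2 + γ ^ 2 * ‖v' t‖ ^ 2) :
    ∀ t ∈ Icc (0 : ℝ) T,
      E t ≤ (b / ω) * Real.exp (-ω * t) * E 0 +
        ((b + 2) / (b * ω)) * (1 - Real.exp (-ω * t)) *
          sSup ((fun s => ‖f s‖ ^ 2) '' Icc (0 : ℝ) t) := by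
  intro t ht
  obtain ⟨hγ0, hγle⟩ := hγ
  have hc0 : 0 < c₁ := by linarith
  have hb0 : 0 < b := by rw [hb]; positivity
  have hb1 : b * (2 * γ₁ ^ 2 + c₁ + 1) ≤ 2 := by
    have : b ≤ 2 / (2 * γ₁ ^ 2 + c₁ + 1) := by rw [hb]; exact min_le_left _ _
    rwa [le_div_iff₀ (by positivity)] at this
  have hb2 : b * c₁ ≤ 1 / 2 := by
    have : b ≤ 1 / (2 * c₁) := by
      rw [hb]; exact (min_le_right _ _).trans (min_le_left _ _)
    rw [le_div_iff₀ (by positivity)] at this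
    linarith
  have hb3 : b * (γ₁ * c₁) ≤ 1 := by
    have : b ≤ 1 / (γ₁ * c₁) := by
      rw [hb]; exact (min_le_right _ _).trans (min_le_right _ _)
    rwa [le_div_iff₀ (by positivity)] at this
  have hb1' : b * (2 * γ ^ 2 + c₁ + 1) ≤ 2 := by
    refine le_trans ?_ hb1
    gcongr
  have hK0 : 0 < 2 + c₁ * b * γ₁ := by positivity
  have hω0 : 0 < ω := by rw [hω]; positivity
  have hωK : ω * (2 + c₁ * b * γ₁) = b := by rw [hω]; field_simp
  have hbω : b / ω = 2 + c₁ * b * γ₁ := by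
    rw [div_eq_iff hω0.ne']; linarith
  set F := sSup ((fun s => ‖f s‖ ^ 2) '' Icc (0 : ℝ) t) with hF
  have hsub : Icc (0 : ℝ) t ⊆ Icc 0 T := Icc_subset_Icc_right ht.2
  have hFle : ∀ s ∈ Icc (0 : ℝ) t, ‖f s‖ ^ 2 ≤ F := by
    intro s hs
    have hcont : ContinuousOn (fun s => ‖f s‖ ^ 2) (Icc (0 : ℝ) t) :=
      ((hf.mono hsub).norm).pow 2
    exact le_csSup (isCompact_Icc.bddAbove_image hcont) (mem_image_of_mem _ hs)
  -- bound on the cross term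
  have hcross : ∀ s, |b * γ ^ 2 * ⟪v s, v' s⟫| ≤ c₁ * b * γ₁ / 2 * E s := by
    intro s
    have h1 : |⟪v s, v' s⟫| ≤ ‖v s‖ * ‖v' s‖ := abs_real_inner_le_norm _ _
    have h2 := hB (v s)
    rw [abs_mul, abs_of_pos (by positivity : 0 < b * γ ^ 2), hE]
    have h3 : γ * (‖v s‖ * ‖v' s‖) ≤ c₁ / 2 * (‖B (v s)‖ ^ 2 + γ ^ 2 * ‖v' s‖ ^ 2) := by
      have : 0 ≤ (c₁ - 1) * (γ ^ 2 * ‖v' s‖ ^ 2) := mul_nonneg (by linarith) (by positivity)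
      nlinarith [sq_nonneg (‖v s‖ - γ * ‖v' s‖)]
    calc b * γ ^ 2 * |⟪v s, v' s⟫| ≤ b * γ ^ 2 * (‖v s‖ * ‖v' s‖) := by gcongr
      _ = b * γ * (γ * (‖v s‖ * ‖v' s‖)) := by ring
      _ ≤ b * γ₁ * (c₁ / 2 * (‖B (v s)‖ ^ 2 + γ ^ 2 * ‖v' s‖ ^ 2)) := by gcongr
      _ = _ := by ring
  have hE0 : ∀ s, 0 ≤ E s := by intro s; rw [hE]; positivity
  let Φ : ℝ → ℝ := fun s => E s + b * γ ^ 2 * ⟪v s, v' s⟫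
  have hΦlow : ∀ s, E s ≤ 2 * Φ s := by
    intro s
    have h := (abs_le.1 (hcross s)).1
    have h2 : b * (γ₁ * c₁) * E s ≤ 1 * E s := mul_le_mul_of_nonneg_right hb3 (hE0 s)
    simp only [Φ]
    nlinarith
  have hΦup : ∀ s, 2 * Φ s ≤ (2 + c₁ * b * γ₁) * E s := by
    intro s
    have h := (abs_le.1 (hcross s)).2
    simp only [Φ]
    nlinarith
  let C : ℝ := 1 / 2 + 1 / b
  let Φ' : ℝ → ℝ := fun s => 2 * ⟪f s, v' s⟫ - 2 * ‖v' s‖ ^ 2 + b * (γ ^ 2 * ‖v' s‖ ^ 2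
    + ⟪v s, f s⟫ - ⟪v s, v' s⟫ - ‖B (v s)‖ ^ 2)
  have hΦd : ∀ s ∈ Icc (0 : ℝ) T, HasDerivWithinAt Φ (Φ' s) (Icc (0 : ℝ) T) s := by
    intro s hs
    have d1 := hv s hs
    have d2 := hv' s hs
    have d3 : HasDerivWithinAt (fun r => B (v r)) (B (v' s)) (Icc (0 : ℝ) T) s :=
      B.hasFDerivAt.comp_hasDerivWithinAt s d1
    have d4 := ((d3.norm_sq).add ((d2.norm_sq).const_mul (γ ^ 2))).add
      ((d1.inner ℝ d2).const_mul (b * γ ^ 2))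
    have hfun : Φ = fun r => ‖B (v r)‖ ^ 2 + γ ^ 2 * ‖v' r‖ ^ 2 + b * γ ^ 2 * ⟪v r, v' r⟫ := by
      simp only [Φ, hE]
    rw [hfun]
    refine HasDerivWithinAt.congr_deriv d4 ?_
    have e : γ ^ 2 • v'' s = f s - v' s - B (B (v s)) := by
      rw [← heq s hs]; abel
    have e1 : γ ^ 2 * ⟪v' s, v'' s⟫ = ⟪f s, v' s⟫ - ‖v' s‖ ^ 2 - ⟪B (v s), B (v' s)⟫ := by
      rw [← real_inner_smul_right, e, inner_sub_right, inner_sub_right,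
        real_inner_self_eq_norm_sq, real_inner_comm, ← hBsym (v' s), real_inner_comm (B (v s))]
    have e2 : γ ^ 2 * ⟪v s, v'' s⟫ = ⟪v s, f s⟫ - ⟪v s, v' s⟫ - ‖B (v s)‖ ^ 2 := by
      rw [← real_inner_smul_right, e, inner_sub_right, inner_sub_right,
        ← hBsym (v s), real_inner_self_eq_norm_sq]
    have e3 : ⟪v' s, v' s⟫ = ‖v' s‖ ^ 2 := real_inner_self_eq_norm_sq _
    simp only [Φ']
    rw [e3]
    linear_combination 2 * e1 + b * e2
  have hdiss : ∀ s ∈ Icc (0 : ℝ) t, Φ' s + ω * Φ s ≤ C * F := by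
    intro s hs
    have hq := aux_quad b c₁ γ ‖f s‖ ‖v' s‖ ‖v s‖ (‖B (v s)‖ ^ 2) (1 / b) hb0 hc₁
      (by field_simp) hb1' hb2 (norm_nonneg _) (norm_nonneg _) (norm_nonneg _) (hB _)
    have i1 : ⟪f s, v' s⟫ ≤ ‖f s‖ * ‖v' s‖ := real_inner_le_norm _ _
    have i2 : b * ⟪v s, f s⟫ ≤ b * (‖v s‖ * ‖f s‖) :=
      mul_le_mul_of_nonneg_left (real_inner_le_norm _ _) hb0.le
    have i3 : b * (-⟪v s, v' s⟫) ≤ b * (‖v s‖ * ‖v' s‖) :=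
      mul_le_mul_of_nonneg_left (by
        have := abs_real_inner_le_norm (v s) (v' s)
        exact (neg_le_abs _).trans this) hb0.le
    have i4 : ω * (2 * Φ s) ≤ b * E s := by
      have := mul_le_mul_of_nonneg_left (hΦup s) hω0.le
      rwa [← mul_assoc ω (2 + _), hωK] at this
    have i5 : E s = ‖B (v s)‖ ^ 2 + γ ^ 2 * ‖v' s‖ ^ 2 := by rw [hE]
    rw [i5] at i4
    have i6 : (1 / 2 + 1 / b) * ‖f s‖ ^ 2 ≤ C * F :=
      mul_le_mul_of_nonneg_left (hFle s hs) (by positivity)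
    simp only [Φ']
    linarith
  let g : ℝ → ℝ := fun s => Real.exp (ω * s) * (Φ s - C * F / ω)
  have hgd : ∀ s ∈ Icc (0 : ℝ) T, HasDerivWithinAt g
      (Real.exp (ω * s) * (Φ' s + ω * Φ s - C * F)) (Icc (0 : ℝ) T) s := by
    intro s hs
    have h1 : HasDerivWithinAt (fun s => Real.exp (ω * s)) (Real.exp (ω * s) * (ω * 1))
        (Icc (0 : ℝ) T) s := (((hasDerivAt_id s).const_mul ω).exp).hasDerivWithinAt
    refine (h1.mul ((hΦd s hs).sub_const (C * F / ω))).congr_deriv ?_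
    field_simp
    ring
  have hanti : AntitoneOn g (Icc 0 t) := by
    refine antitoneOn_of_hasDerivWithinAt_nonpos (convex_Icc 0 t)
      (f' := fun s => Real.exp (ω * s) * (Φ' s + ω * Φ s - C * F)) ?_ ?_ ?_
    · intro s hs
      exact ((hgd s (hsub hs)).mono hsub).continuousWithinAt
    · intro s hs
      have hs' := interior_subset hs
      exact (hgd s (hsub hs')).mono (interior_subset.trans hsub)
    · intro s hs
      have := hdiss s (interior_subset hs)
      exact mul_nonpos_of_nonneg_of_nonpos (Real.exp_pos _).le (by linarith)
  have hg := hanti (left_mem_Icc.2 ht.1) (right_mem_Icc.2 ht.1) ht.1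
  simp only [g, mul_zero, Real.exp_zero, one_mul] at hg
  have hx : Real.exp (-ω * t) * Real.exp (ω * t) = 1 := by
    rw [← Real.exp_add]; simp
  have hg2 := mul_le_mul_of_nonneg_left hg (Real.exp_pos (-ω * t)).le
  rw [← mul_assoc, hx, one_mul] at hg2
  have hC : (b + 2) / (b * ω) * (1 - Real.exp (-ω * t)) * F
      = 2 * (C * F / ω) * (1 - Real.exp (-ω * t)) := by
    simp only [C]; field_simp
  rw [hC, hbω]
  have h0 := mul_le_mul_of_nonneg_left (hΦup 0) (Real.exp_pos (-ω * t)).le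
  have h1 := hΦlow t
  nlinarith
end

section
/- Assume f ≡ 0, i.e. γ²v''(t) + v'(t) + B(Bv(t)) = 0 on [0,T]. With b := min{2/(2γ₁² + c₁ + 1), 1/(2c₁), 1/(γ₁c₁)} and ω := b/(2 + c₁bγ₁), the energy E(t) := ‖Bv(t)‖² + γ²‖v'(t)‖² decays exponentially: E(t) ≤ (2 + c₁bγ₁)·e^{−ωt}·E(0) for all t ∈ [0,T], with decay rate ω and prefactor 2 + c₁bγ₁ depending only on c₁ and γ₁, hence uniform with respect to γ ∈ (0,γ₁]. -/
open Set RealInnerProductSpace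

/-- Assume `f ≡ 0`, i.e. `γ²v''(t) + v'(t) + B(Bv(t)) = 0` on `[0,T]`.
With `b := min{2/(2γ₁² + c₁ + 1), 1/(2c₁), 1/(γ₁c₁)}` and `ω := b/(2 + c₁bγ₁)`
(depending only on `c₁` and `γ₁`, hence uniform in `γ ∈ (0,γ₁]`), the energy
`E(t) := ‖Bv(t)‖² + γ²‖v'(t)‖²` decays exponentially:
`E(t) ≤ (2 + c₁bγ₁)·e^{−ωt}·E(0)` for all `t ∈ [0,T]`. -/
theorem stmt10
    {H : Type*} [NormedAddCommGroup H] [InnerProductSpace ℝ H] [CompleteSpace H]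
    (B : H →L[ℝ] H) (hBsym : ∀ x y : H, ⟪B x, y⟫ = ⟪x, B y⟫)
    (c₁ : ℝ) (hc₁ : 1 ≤ c₁) (hB : ∀ z : H, ‖z‖ ^ 2 ≤ c₁ * ‖B z‖ ^ 2)
    (γ₁ γ T : ℝ) (hγ₁ : 0 < γ₁) (hγ : γ ∈ Ioc 0 γ₁) (hT : 0 < T)
    (v v' v'' : ℝ → H)
    (hv : ∀ t ∈ Icc (0 : ℝ) T, HasDerivWithinAt v (v' t) (Icc (0 : ℝ) T) t)
    (hv' : ∀ t ∈ Icc (0 : ℝ) T, HasDerivWithinAt v' (v'' t) (Icc (0 : ℝ) T) t)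
    (hv'' : ContinuousOn v'' (Icc (0 : ℝ) T))
    (heq : ∀ t ∈ Icc (0 : ℝ) T, γ ^ 2 • v'' t + v' t + B (B (v t)) = 0)
    (b ω : ℝ)
    (hb : b = min (2 / (2 * γ₁ ^ 2 + c₁ + 1)) (min (1 / (2 * c₁)) (1 / (γ₁ * c₁))))
    (hω : ω = b / (2 + c₁ * b * γ₁))
    (E : ℝ → ℝ)
    (hE : E = fun t => ‖B (v t)‖ ^ 2 + γ ^ 2 * ‖v' t‖ ^ 2) :
    ∀ t ∈ Icc (0 : ℝ) T,
      E t ≤ (2 + c₁ * b * γ₁) * Real.exp (-ω * t) * E 0 := by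
  obtain ⟨hg0, hg1⟩ := hγ
  have hc0 : 0 < c₁ := by linarith
  have hb0 : 0 < b := by
    rw [hb]; refine lt_min ?_ (lt_min ?_ ?_) <;> positivity
  have hb1 : b * (2 * γ₁ ^ 2 + c₁ + 1) ≤ 2 := by
    rw [← le_div_iff₀ (by positivity), hb]; exact min_le_left _ _
  have hb3 : b * (γ₁ * c₁) ≤ 1 := by
    rw [← le_div_iff₀ (by positivity), hb]
    exact (min_le_right _ _).trans (min_le_right _ _)
  have hD : 0 < 2 + c₁ * b * γ₁ := by positivity
  have hω0 : 0 < ω := by rw [hω]; positivity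
  have hωD : ω * (2 + c₁ * b * γ₁) = b := by rw [hω]; field_simp
  have hgg : γ ^ 2 ≤ γ₁ ^ 2 := by gcongr
  have hE0 : ∀ t, 0 ≤ E t := by intro t; rw [hE]; positivity
  -- inner product bound
  have hin : ∀ t, |γ ^ 2 * ⟪v t, v' t⟫| ≤ γ₁ * c₁ / 2 * E t := by
    intro t
    have h1 := abs_real_inner_le_norm (v t) (v' t)
    have h2 := hB (v t)
    have h3 : γ ^ 2 * (‖v t‖ * ‖v' t‖) ≤ γ / 2 * (‖v t‖ ^ 2 + γ ^ 2 * ‖v' t‖ ^ 2) := by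
      have := mul_nonneg hg0.le (sq_nonneg (‖v t‖ - γ * ‖v' t‖))
      nlinarith
    have h4 : ‖v t‖ ^ 2 + γ ^ 2 * ‖v' t‖ ^ 2 ≤ c₁ * E t := by
      rw [hE]
      have : γ ^ 2 * ‖v' t‖ ^ 2 ≤ c₁ * (γ ^ 2 * ‖v' t‖ ^ 2) :=
        le_mul_of_one_le_left (by positivity) hc₁
      simp only []
      linarith
    have h5 : 0 ≤ c₁ * E t := mul_nonneg hc0.le (hE0 t)
    calc |γ ^ 2 * ⟪v t, v' t⟫| = γ ^ 2 * |⟪v t, v' t⟫| := by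
          rw [abs_mul, abs_of_nonneg (by positivity)]
      _ ≤ γ ^ 2 * (‖v t‖ * ‖v' t‖) := by gcongr
      _ ≤ γ / 2 * (‖v t‖ ^ 2 + γ ^ 2 * ‖v' t‖ ^ 2) := h3
      _ ≤ γ / 2 * (c₁ * E t) := by gcongr
      _ ≤ γ₁ / 2 * (c₁ * E t) := by gcongr
      _ = _ := by ring
  set F : ℝ → ℝ := fun t => E t + b * (γ ^ 2 * ⟪v t, v' t⟫) with hF
  have hFlo : ∀ t, E t ≤ 2 * F t := by
    intro t
    have h1 := mul_le_mul_of_nonneg_left (neg_le_of_abs_le (hin t)) hb0.le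
    have h2 := mul_le_mul_of_nonneg_right hb3 (hE0 t)
    simp only [hF]; nlinarith
  have hFhi : ∀ t, 2 * F t ≤ (2 + c₁ * b * γ₁) * E t := by
    intro t
    have h1 := mul_le_mul_of_nonneg_left (le_of_abs_le (hin t)) hb0.le
    simp only [hF]; nlinarith
  have hder : ∀ t ∈ Icc (0 : ℝ) T, HasDerivWithinAt F
      (-2 * ‖v' t‖ ^ 2 + b * (γ ^ 2 * ‖v' t‖ ^ 2 - ⟪v t, v' t⟫ - ‖B (v t)‖ ^ 2))
      (Icc (0 : ℝ) T) t := by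
    intro t ht
    have d1 := (B.hasFDerivAt (x := v t)).comp_hasDerivWithinAt t (hv t ht)
    have d2 := d1.norm_sq
    have d3 := (hv' t ht).norm_sq.const_mul (γ ^ 2)
    have d4 := (((hv t ht).inner ℝ (hv' t ht)).const_mul (γ ^ 2)).const_mul b
    have d := (d2.add d3).add d4
    have e : γ ^ 2 • v'' t = - v' t - B (B (v t)) := by
      have := heq t ht
      rw [add_assoc] at this
      rw [eq_neg_of_add_eq_zero_left this]; abel
    have e1 : γ ^ 2 * ⟪v' t, v'' t⟫ = - ‖v' t‖ ^ 2 - ⟪B (v t), B (v' t)⟫ := by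
      rw [← real_inner_smul_right, e, inner_sub_right, inner_neg_right,
        real_inner_self_eq_norm_sq, ← hBsym, real_inner_comm]
    have e2 : γ ^ 2 * ⟪v t, v'' t⟫ = - ⟪v t, v' t⟫ - ‖B (v t)‖ ^ 2 := by
      rw [← real_inner_smul_right, e, inner_sub_right, inner_neg_right,
        ← hBsym, real_inner_self_eq_norm_sq]
    rw [hF, hE]
    refine d.congr_deriv ?_
    simp only [Function.comp, real_inner_self_eq_norm_sq]
    linear_combination 2 * e1 + b * e2
  have hFd : ∀ t, -2 * ‖v' t‖ ^ 2 + b * (γ ^ 2 * ‖v' t‖ ^ 2 - ⟪v t, v' t⟫ - ‖B (v t)‖ ^ 2)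
      ≤ - ω * F t := by
    intro t
    have h0 : ω * F t ≤ b / 2 * E t := by
      have := mul_le_mul_of_nonneg_left (hFhi t) hω0.le
      rw [← mul_assoc ω (2 + _), hωD] at this
      linarith
    have h1 : - ⟪v t, v' t⟫ ≤ ‖B (v t)‖ ^ 2 / 2 + c₁ / 2 * ‖v' t‖ ^ 2 := by
      have h1 := neg_le_of_abs_le (abs_real_inner_le_norm (v t) (v' t))
      have h2 := hB (v t)
      have h3 := sq_nonneg (‖v t‖ - c₁ * ‖v' t‖)
      have h4 : c₁ * (‖v t‖ * ‖v' t‖) ≤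
          c₁ * (‖B (v t)‖ ^ 2 / 2 + c₁ / 2 * ‖v' t‖ ^ 2) := by nlinarith
      have := le_of_mul_le_mul_left h4 hc0
      linarith
    have h2 := mul_le_mul_of_nonneg_left h1 hb0.le
    have h3 : b * (3 / 2 * γ ^ 2 + c₁ / 2) ≤ 2 := by
      refine le_trans ?_ hb1
      refine mul_le_mul_of_nonneg_left ?_ hb0.le
      nlinarith [sq_nonneg γ]
    have h4 := mul_le_mul_of_nonneg_right h3 (sq_nonneg ‖v' t‖)
    have h5 : E t = ‖B (v t)‖ ^ 2 + γ ^ 2 * ‖v' t‖ ^ 2 := by rw [hE]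
    rw [h5] at h0
    nlinarith
  have hG : ∀ t ∈ Icc (0 : ℝ) T, HasDerivWithinAt (fun t => Real.exp (ω * t) * F t)
      (Real.exp (ω * t) * (ω * 1) * F t + Real.exp (ω * t) * 
      (-2 * ‖v' t‖ ^ 2 + b * (γ ^ 2 * ‖v' t‖ ^ 2 - ⟪v t, v' t⟫ - ‖B (v t)‖ ^ 2)))
      (Icc (0 : ℝ) T) t := fun t ht =>
    (((hasDerivWithinAt_id t _).const_mul ω).exp).mul (hder t ht)
  have hanti : AntitoneOn (fun t => Real.exp (ω * t) * F t) (Icc (0 : ℝ) T) := by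
    refine antitoneOn_of_hasDerivWithinAt_nonpos (convex_Icc _ _)
      (fun t ht => (hG t ht).continuousWithinAt)
      (fun t ht => (hG t (interior_subset ht)).mono interior_subset) ?_
    intro t ht
    have := mul_le_mul_of_nonneg_left (hFd t) (Real.exp_pos (ω * t)).le
    linarith
  intro t ht
  have h := hanti (left_mem_Icc.2 hT.le) ht ht.1
  simp only [mul_zero, Real.exp_zero, one_mul] at h
  have h2 : F t ≤ Real.exp (-ω * t) * F 0 := by
    have := mul_le_mul_of_nonneg_left h (Real.exp_pos (-ω * t)).le
    rwa [← mul_assoc, ← Real.exp_add, show -ω * t + ω * t = 0 by ring, Real.exp_zero,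
      one_mul] at this
  have h3 := mul_le_mul_of_nonneg_left (hFhi 0) (Real.exp_pos (-ω * t)).le
  have h4 := hFlo t
  linarith
end

section
/- Assume in addition that v(0) = 0 and v'(0) = u¹ for some u¹ ∈ H, and that f has the form f(t) = −λ·g(t) − h, where λ > 0, h ∈ H, and g : [0,T] → H is continuous with ‖g(t)‖ ≤ S for all t ∈ [0,T] and some constant S ≥ 0. With b := min{2/(2γ₁² + c₁ + 1), 1/(2c₁), 1/(γ₁c₁)} and ω := b/(2 + c₁bγ₁), the solution satisfies, for all t ∈ [0,T], ‖Bv(t)‖² ≤ (b/ω)·e^{−ωt}·γ²‖u¹‖² + (2(b+2)/(bω))·(1 − e^{−ωt})·(λ²S² + ‖h‖²); in particular the right-hand side is bounded uniformly in t and tends to (2(b+2)/(bω))·(λ²S² + ‖h‖²)·(1 − e^{−ωt}) plus a term proportional to γ² as γ → 0. -/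
open Set RealInnerProductSpace

theorem aux_inner {H : Type*} [NormedAddCommGroup H] [InnerProductSpace ℝ H] (x y : H) (k : ℝ) (hk : 0 < k) :
    2 * |⟪x, y⟫| ≤ k * ‖x‖ ^ 2 + k⁻¹ * ‖y‖ ^ 2 := by
  have h1 : |⟪x, y⟫| ≤ ‖x‖ * ‖y‖ := abs_real_inner_le_norm x y
  have h2 : 0 ≤ k⁻¹ * (k * ‖x‖ - ‖y‖) ^ 2 := by positivity
  have h3 : k⁻¹ * (k * ‖x‖ - ‖y‖) ^ 2 = k * ‖x‖ ^ 2 + k⁻¹ * ‖y‖ ^ 2 - 2 * (‖x‖ * ‖y‖) := by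
    field_simp
    ring
  linarith

theorem aux_lower {H : Type*} [NormedAddCommGroup H] [InnerProductSpace ℝ H] (v p : H)
    (Q b c γ γ₁ : ℝ) (hb : 0 < b) (hc : 1 ≤ c) (hγ : 0 < γ) (hγ₁ : γ ≤ γ₁)
    (h3 : b * (γ₁ * c) ≤ 1) (hN : ‖v‖ ^ 2 ≤ c * Q) (hQ : 0 ≤ Q) :
    Q / 2 ≤ γ ^ 2 * ‖p‖ ^ 2 + Q + b * γ ^ 2 * ⟪v, p⟫ := by
  have h := aux_inner v p (b / 2) (by positivity)
  have h' := neg_abs_le ⟪v, p⟫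
  have e1 : b * γ ^ 2 * (2 * |⟪v, p⟫|) ≤ b * γ ^ 2 * (b / 2 * ‖v‖ ^ 2 + (b / 2)⁻¹ * ‖p‖ ^ 2) := by gcongr
  have e2 : b * γ ^ 2 * (b / 2 * ‖v‖ ^ 2 + (b / 2)⁻¹ * ‖p‖ ^ 2)
      = (b * γ) ^ 2 / 2 * ‖v‖ ^ 2 + 2 * γ ^ 2 * ‖p‖ ^ 2 := by field_simp
  have e3 : (b * γ) ^ 2 / 2 * ‖v‖ ^ 2 ≤ (b * γ) ^ 2 / 2 * (c * Q) := by gcongr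
  have e5 : b * γ * c ≤ 1 := by
    have : b * γ * c ≤ b * γ₁ * c := by gcongr
    linarith
  have e6 : b * γ ≤ 1 := by nlinarith [mul_pos hb hγ]
  have e4 : (b * γ) * (b * γ * c) ≤ 1 * 1 := by gcongr
  have e7 : ((b * γ) * (b * γ * c)) * Q ≤ 1 * Q := by gcongr; linarith
  have e8 : b * γ ^ 2 * (-|⟪v, p⟫|) ≤ b * γ ^ 2 * ⟪v, p⟫ := by gcongr
  linarith

theorem aux_diss {H : Type*} [NormedAddCommGroup H] [InnerProductSpace ℝ H] (v p f : H)
    (Q b c γ γ₁ ω : ℝ) (hb : 0 < b) (hc : 1 ≤ c) (hγ : 0 < γ) (hγ₁ : γ ≤ γ₁)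
    (h1 : b * (2 * γ₁ ^ 2 + c + 1) ≤ 2) (h2 : b * (2 * c) ≤ 1)
    (hω0 : 0 < ω) (hω : ω * (2 + c * b * γ₁) = b)
    (hN : ‖v‖ ^ 2 ≤ c * Q) (hQ : 0 ≤ Q) :
    (-2 * ‖p‖ ^ 2 + 2 * ⟪p, f⟫ + b * (γ ^ 2 * ‖p‖ ^ 2 - Q - ⟪v, p⟫ + ⟪v, f⟫))
     + ω * (γ ^ 2 * ‖p‖ ^ 2 + Q + b * γ ^ 2 * ⟪v, p⟫) ≤ (1 / 2 + 1 / b) * ‖f‖ ^ 2 := by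
  have hc0 : 0 < c := by linarith
  -- upper bound on energy
  have u1 := aux_inner v p γ⁻¹ (by positivity)
  have u2 : b * γ ^ 2 * (2 * |⟪v, p⟫|) ≤ b * γ ^ 2 * (γ⁻¹ * ‖v‖ ^ 2 + γ⁻¹⁻¹ * ‖p‖ ^ 2) := by gcongr
  have u3 : b * γ ^ 2 * (γ⁻¹ * ‖v‖ ^ 2 + γ⁻¹⁻¹ * ‖p‖ ^ 2)
     = b * γ * (‖v‖ ^ 2 + γ ^ 2 * ‖p‖ ^ 2) := by field_simp
  have hp : 0 ≤ γ ^ 2 * ‖p‖ ^ 2 := by positivity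
  have u4 : b * γ * (‖v‖ ^ 2 + γ ^ 2 * ‖p‖ ^ 2) ≤ b * γ₁ * (c * Q + c * (γ ^ 2 * ‖p‖ ^ 2)) := by
    have : 0 < γ₁ := by linarith
    have hcp : γ ^ 2 * ‖p‖ ^ 2 ≤ c * (γ ^ 2 * ‖p‖ ^ 2) := le_mul_of_one_le_left hp hc
    exact mul_le_mul (by gcongr) (add_le_add hN hcp) (by positivity) (by positivity)
  have u5 : b * γ ^ 2 * ⟪v, p⟫ ≤ b * γ ^ 2 * |⟪v, p⟫| := by
    gcongr
    exact le_abs_self _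
  have u6 : ω * (γ ^ 2 * ‖p‖ ^ 2 + Q + b * γ ^ 2 * ⟪v, p⟫) ≤
     ω * ((2 + c * b * γ₁) / 2 * (γ ^ 2 * ‖p‖ ^ 2 + Q)) := by
    gcongr
    linarith
  have u7 : ω * ((2 + c * b * γ₁) / 2 * (γ ^ 2 * ‖p‖ ^ 2 + Q)) = b / 2 * (γ ^ 2 * ‖p‖ ^ 2 + Q) := by
    linear_combination (γ ^ 2 * ‖p‖ ^ 2 + Q) / 2 * hω
  -- other terms
  have k1 := aux_inner v p (1 / (2 * c)) (by positivity)
  have k2 := aux_inner v f (1 / (2 * c)) (by positivity)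
  have k3 := aux_inner p f b hb
  have kk : 1 / (2 * c) * ‖v‖ ^ 2 ≤ Q / 2 := by
    calc 1 / (2 * c) * ‖v‖ ^ 2 ≤ 1 / (2 * c) * (c * Q) := by gcongr
      _ = Q / 2 := by field_simp
  have ki : (1 / (2 * c))⁻¹ = 2 * c := by field_simp
  rw [ki] at k1 k2
  have m1 : b * (-⟪v, p⟫) ≤ b * (Q / 4 + c * ‖p‖ ^ 2) := by
    gcongr
    linarith [neg_le_abs ⟪v, p⟫]
  have m2 : b * ⟪v, f⟫ ≤ b * (Q / 4 + c * ‖f‖ ^ 2) := by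
    gcongr
    linarith [le_abs_self ⟪v, f⟫]
  have m3 := le_abs_self ⟪p, f⟫
  have hg2 : b * γ ^ 2 ≤ b * γ₁ ^ 2 := by gcongr
  have hbg : 0 ≤ b * γ ^ 2 := by positivity
  have n1 : (3 / 2 * (b * γ ^ 2) + b * c + b) * ‖p‖ ^ 2 ≤ 2 * ‖p‖ ^ 2 := by
    gcongr
    linarith
  have n2 : (b * c) * ‖f‖ ^ 2 ≤ 1 / 2 * ‖f‖ ^ 2 := by
    gcongr
    linarith
  rw [one_div b]
  linarith

/-- Assume in addition that `v(0) = 0` and `v'(0) = u1` for some `u1 ∈ H`,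
and that `f` has the form `f(t) = −λ·g(t) − h`, where `λ > 0`, `h ∈ H`, and
`g : [0,T] → H` is continuous with `‖g(t)‖ ≤ S` on `[0,T]` for some `S ≥ 0`.
With `b := min{2/(2γ₁² + c₁ + 1), 1/(2c₁), 1/(γ₁c₁)}` and `ω := b/(2 + c₁bγ₁)`,
the solution satisfies, for all `t ∈ [0,T]`,
`‖Bv(t)‖² ≤ (b/ω)·e^{−ωt}·γ²‖u1‖² + (2(b+2)/(bω))·(1 − e^{−ωt})·(λ²S² + ‖h‖²)`. -/
theorem stmt11
    {H : Type*} [NormedAddCommGroup H] [InnerProductSpace ℝ H] [CompleteSpace H]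
    (B : H →L[ℝ] H) (hBsym : ∀ x y : H, ⟪B x, y⟫ = ⟪x, B y⟫)
    (c₁ : ℝ) (hc₁ : 1 ≤ c₁) (hB : ∀ z : H, ‖z‖ ^ 2 ≤ c₁ * ‖B z‖ ^ 2)
    (γ₁ γ T : ℝ) (hγ₁ : 0 < γ₁) (hγ : γ ∈ Ioc 0 γ₁) (hT : 0 < T)
    (f v v' v'' : ℝ → H)
    (hf : ContinuousOn f (Icc (0 : ℝ) T))
    (hv : ∀ t ∈ Icc (0 : ℝ) T, HasDerivWithinAt v (v' t) (Icc (0 : ℝ) T) t)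
    (hv' : ∀ t ∈ Icc (0 : ℝ) T, HasDerivWithinAt v' (v'' t) (Icc (0 : ℝ) T) t)
    (hv'' : ContinuousOn v'' (Icc (0 : ℝ) T))
    (heq : ∀ t ∈ Icc (0 : ℝ) T, γ ^ 2 • v'' t + v' t + B (B (v t)) = f t)
    (u1 : H) (hv0 : v 0 = 0) (hv'0 : v' 0 = u1)
    (lam : ℝ) (hlam : 0 < lam) (h : H) (g : ℝ → H) (S : ℝ) (hS : 0 ≤ S)
    (hg : ContinuousOn g (Icc (0 : ℝ) T))
    (hgS : ∀ t ∈ Icc (0 : ℝ) T, ‖g t‖ ≤ S)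
    (hfform : ∀ t ∈ Icc (0 : ℝ) T, f t = -(lam • g t) - h)
    (b ω : ℝ)
    (hb : b = min (2 / (2 * γ₁ ^ 2 + c₁ + 1)) (min (1 / (2 * c₁)) (1 / (γ₁ * c₁))))
    (hω : ω = b / (2 + c₁ * b * γ₁)) :
    ∀ t ∈ Icc (0 : ℝ) T,
      ‖B (v t)‖ ^ 2 ≤ (b / ω) * Real.exp (-ω * t) * (γ ^ 2 * ‖u1‖ ^ 2) +
        (2 * (b + 2) / (b * ω)) * (1 - Real.exp (-ω * t)) *
          (lam ^ 2 * S ^ 2 + ‖h‖ ^ 2) := by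
  obtain ⟨hγ0, hγle⟩ := hγ
  have hc0 : 0 < c₁ := by linarith
  have hb0 : 0 < b := by rw [hb]; positivity
  have b1 : b * (2 * γ₁ ^ 2 + c₁ + 1) ≤ 2 := by
    rw [← le_div_iff₀ (by positivity), hb]; exact min_le_left _ _
  have b2 : b * (2 * c₁) ≤ 1 := by
    rw [← le_div_iff₀ (by positivity), hb]; exact (min_le_right _ _).trans (min_le_left _ _)
  have b3 : b * (γ₁ * c₁) ≤ 1 := by
    rw [← le_div_iff₀ (by positivity), hb]; exact (min_le_right _ _).trans (min_le_right _ _)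
  clear hb
  have hω0 : 0 < ω := by rw [hω]; positivity
  have hω1 : ω * (2 + c₁ * b * γ₁) = b := by
    rw [hω]; field_simp
  have hbω : 2 ≤ b / ω := by
    rw [le_div_iff₀ hω0, ← hω1]
    have : 0 ≤ ω * (c₁ * b * γ₁) := by positivity
    linarith
  clear hω
  set F := lam ^ 2 * S ^ 2 + ‖h‖ ^ 2 with hF
  have hF0 : 0 ≤ F := by positivity
  have hfF : ∀ t ∈ Icc (0 : ℝ) T, ‖f t‖ ^ 2 ≤ 2 * F := by
    intro t ht
    have h1 : ‖f t‖ ≤ lam * S + ‖h‖ := by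
      rw [hfform t ht]
      refine (norm_sub_le _ _).trans ?_
      rw [norm_neg, norm_smul, Real.norm_of_nonneg hlam.le]
      gcongr
      exact hgS t ht
    have h2 : ‖f t‖ ^ 2 ≤ (lam * S + ‖h‖) ^ 2 := by gcongr
    nlinarith [sq_nonneg (lam * S - ‖h‖)]
  let E : ℝ → ℝ := fun t => γ ^ 2 * ‖v' t‖ ^ 2 + ‖B (v t)‖ ^ 2 + b * γ ^ 2 * ⟪v t, v' t⟫
  let D : ℝ → ℝ := fun t => -2 * ‖v' t‖ ^ 2 + 2 * ⟪v' t, f t⟫ +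
    b * (γ ^ 2 * ‖v' t‖ ^ 2 - ‖B (v t)‖ ^ 2 - ⟪v t, v' t⟫ + ⟪v t, f t⟫)
  have hE : ∀ t ∈ Icc (0 : ℝ) T, HasDerivWithinAt E (D t) (Icc (0 : ℝ) T) t := by
    intro t ht
    have d1 := (hv' t ht).norm_sq
    have d0 : HasDerivWithinAt (fun t => B (v t)) (B (v' t)) (Icc (0 : ℝ) T) t :=
      B.hasFDerivAt.comp_hasDerivWithinAt t (hv t ht)
    have d2 := d0.norm_sq
    have d3 := (hv t ht).inner ℝ (hv' t ht)
    have d := ((d1.const_mul (γ ^ 2)).add d2).add (d3.const_mul (b * γ ^ 2))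
    refine d.congr_deriv ?_
    have q1 : γ ^ 2 * ⟪v' t, v'' t⟫ = ⟪v' t, f t⟫ - ‖v' t‖ ^ 2 - ⟪B (v t), B (v' t)⟫ := by
      rw [← heq t ht, inner_add_right, inner_add_right, inner_smul_right,
        real_inner_self_eq_norm_sq, ← hBsym (v' t), real_inner_comm (B (v t)) (B (v' t))]
      ring
    have q2 : γ ^ 2 * ⟪v t, v'' t⟫ = ⟪v t, f t⟫ - ⟪v t, v' t⟫ - ‖B (v t)‖ ^ 2 := by
      rw [← heq t ht, inner_add_right, inner_add_right, inner_smul_right,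
         ← hBsym (v t), real_inner_self_eq_norm_sq]
      ring
    have q3 := real_inner_self_eq_norm_sq (v' t)
    simp only [D]
    linear_combination 2 * q1 + b * q2 + b * γ ^ 2 * q3
  have hED : ∀ t ∈ Icc (0 : ℝ) T, D t + ω * E t ≤ (1 / 2 + 1 / b) * (2 * F) := by
    intro t ht
    refine (aux_diss (v t) (v' t) (f t) (‖B (v t)‖ ^ 2) b c₁ γ γ₁ ω hb0 hc₁ hγ0 hγle b1 b2 hω0 hω1
      (hB _) (by positivity)).trans ?_
    gcongr
    exact hfF t ht
  set K := (1 / 2 + 1 / b) * (2 * F) with hK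
  let φ : ℝ → ℝ := fun t => Real.exp (ω * t) * (E t - K / ω)
  have hφ : ∀ t ∈ Icc (0 : ℝ) T, HasDerivWithinAt φ
      (Real.exp (ω * t) * (D t + ω * E t - K)) (Icc (0 : ℝ) T) t := by
    intro t ht
    have e1 : HasDerivAt (fun t : ℝ => Real.exp (ω * t)) (Real.exp (ω * t) * (ω * 1)) t :=
      ((hasDerivAt_id t).const_mul ω).exp
    refine (e1.hasDerivWithinAt.mul ((hE t ht).sub_const (K / ω))).congr_deriv ?_
    field_simp
    ring
  have hanti : AntitoneOn φ (Icc (0 : ℝ) T) := by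
    refine antitoneOn_of_hasDerivWithinAt_nonpos (convex_Icc 0 T)
      (fun t ht => (hφ t ht).continuousWithinAt)
      (fun t ht => (hφ t (interior_subset ht)).mono interior_subset) ?_
    intro t ht
    refine mul_nonpos_of_nonneg_of_nonpos (Real.exp_pos _).le ?_
    linarith [hED t (interior_subset ht)]
  intro t ht
  have hle := hanti (left_mem_Icc.2 hT.le) ht ht.1
  have hE0 : E 0 = γ ^ 2 * ‖u1‖ ^ 2 := by simp [E, hv0, hv'0]
  simp only [φ, hE0, mul_zero, Real.exp_zero, one_mul] at hle
  have hx : Real.exp (-ω * t) * Real.exp (ω * t) = 1 := by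
    rw [← Real.exp_add]; simp
  have hle2 := mul_le_mul_of_nonneg_left hle (Real.exp_pos (-ω * t)).le
  rw [← mul_assoc, hx, one_mul] at hle2
  have hlow := aux_lower (v t) (v' t) (‖B (v t)‖ ^ 2) b c₁ γ γ₁ hb0 hc₁ hγ0 hγle b3
    (hB _) (by positivity)
  change _ ≤ E t at hlow
  have hfin : 2 * (b + 2) / (b * ω) * (1 - Real.exp (-ω * t)) * F
      = 2 * (K / ω * (1 - Real.exp (-ω * t))) := by
    rw [hK]; field_simp
  have hfin2 : 2 * (Real.exp (-ω * t) * (γ ^ 2 * ‖u1‖ ^ 2)) ≤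
      b / ω * (Real.exp (-ω * t) * (γ ^ 2 * ‖u1‖ ^ 2)) := by gcongr
  rw [hfin]
  linarith
end
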